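/- Let M be an acyclic matching on the graph G(C•) of the chain complex C•. Then the Morse maps ∂^M square to zero: ∂_i^M ∘ ∂_{i+1}^M = 0 for all i ≥ 0, so (C_i^M, ∂_i^M) is a chain complex. -/

import Mathlib

/-!
Algebraic Discrete Morse theory (Jöllenbeck–Welker).

Setup: `R` is a (possibly noncommutative) ring and `C` is a chain complex of free
left `R`-modules `C i = X i → R` with fixed finite basis `X i` in homological
degree `i`; the differential is `∂ i (c) = ∑ c', d i c c' • c'` (we record only the
matrix of coefficients `d`).  `M` is a matching on the associated weighted directed
graph, `MStep` describes the edges of the modified graph `G_M`, `MPath` the directed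
paths, `Gamma v w` the sum of the weights of all paths from `v` to `w`, `Crit` the
critical basis elements, `DMmap` the Morse differential, and `fmap`, `gmap`, `chimap`
the comparison maps and the homotopy.
-/

attribute [local instance] Classical.propDecidable

noncomputable section

section ADMT

variable {R : Type} [Ring R]
variable (X : ℕ → Type) [∀ i, Fintype (X i)]
variable (d : ∀ i, X (i + 1) → X i → R)
variable (M : ∀ i, Set (X (i + 1) × X i))

/-- The family of coefficients `d` of the differentials satisfies `∂ ∘ ∂ = 0`,
i.e. `C` is a chain complex. -/
def IsComplexAux : Prop :=
  ∀ (i : ℕ) (c : X (i + 2)) (c'' : X i),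
    ∑ c' : X (i + 1), d (i + 1) c c' * d i c' c'' = 0

/-- The edges of the modified graph `G_M`: downward steps along non-matched edges
of the graph `G(C)` (weight `d i c c'`), and upward reversed steps along matched
edges (weight `-(d i c c')⁻¹`). -/
inductive MStep : (Σ i, X i) → (Σ i, X i) → Prop
  | down (i : ℕ) (c : X (i + 1)) (c' : X i) (hne : d i c c' ≠ 0)
      (hnm : (c, c') ∉ M i) : MStep ⟨i + 1, c⟩ ⟨i, c'⟩
  | up (i : ℕ) (c : X (i + 1)) (c' : X i) (hmem : (c, c') ∈ M i) :
      MStep ⟨i, c'⟩ ⟨i + 1, c⟩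

/-- `M` is an acyclic matching: all edges of `M` are edges of the graph `G(C)`,
every vertex lies in at most one edge of `M`, the weights of matched edges are
central units of `R`, and the modified graph `G_M` has no directed cycle. -/
def IsAcyclicMatching : Prop :=
  (∀ (i : ℕ) (c : X (i + 1)) (c' : X i), (c, c') ∈ M i → d i c c' ≠ 0) ∧
  (∀ (i : ℕ) (c : X (i + 1)) (c₁ c₂ : X i), (c, c₁) ∈ M i → (c, c₂) ∈ M i → c₁ = c₂) ∧
  (∀ (i : ℕ) (c₁ c₂ : X (i + 1)) (c' : X i), (c₁, c') ∈ M i → (c₂, c') ∈ M i → c₁ = c₂) ∧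
  (∀ (i : ℕ) (a : X (i + 2)) (b : X (i + 1)) (c : X i),
      (a, b) ∈ M (i + 1) → (b, c) ∈ M i → False) ∧
  (∀ (i : ℕ) (c : X (i + 1)) (c' : X i), (c, c') ∈ M i →
      d i c c' ∈ Set.center R ∧ IsUnit (d i c c')) ∧
  (∀ v : Σ i, X i, ¬ Relation.TransGen (MStep X d M) v v)

/-- Directed paths in the modified graph `G_M`. -/
inductive MPath : (Σ i, X i) → (Σ i, X i) → Type
  | nil (v : Σ i, X i) : MPath v v
  | down (i : ℕ) (c : X (i + 1)) (c' : X i) (hne : d i c c' ≠ 0)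
      (hnm : (c, c') ∉ M i) (w : Σ i, X i) (p : MPath ⟨i, c'⟩ w) :
      MPath ⟨i + 1, c⟩ w
  | up (i : ℕ) (c : X (i + 1)) (c' : X i) (hmem : (c, c') ∈ M i)
      (w : Σ i, X i) (p : MPath ⟨i + 1, c⟩ w) : MPath ⟨i, c'⟩ w

/-- The weight of a path: the product of the weights of its edges.  A non-matched
edge `c → c'` has weight `d i c c'`; a reversed matched edge has weight
`-(d i c c')⁻¹`. -/
def MPath.weight : ∀ {v w : Σ i, X i}, MPath X d M v w → R
  | _, _, .nil _ => 1
  | _, _, .down i c c' _ _ _ p => d i c c' * MPath.weight p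
  | _, _, .up i c c' _ _ p => -(Ring.inverse (d i c c')) * MPath.weight p

/-- The first step of the path decreases the homological degree. -/
def MPath.firstDown : ∀ {v w : Σ i, X i}, MPath X d M v w → Prop
  | _, _, .nil _ => False
  | _, _, .down _ _ _ _ _ _ _ => True
  | _, _, .up _ _ _ _ _ _ => False

/-- The first step of the path increases the homological degree. -/
def MPath.firstUp : ∀ {v w : Σ i, X i}, MPath X d M v w → Prop
  | _, _, .nil _ => False
  | _, _, .down _ _ _ _ _ _ _ => False
  | _, _, .up _ _ _ _ _ _ => True

/-- `Γ(v,w)`: the sum of the weights of all directed paths from `v` to `w` in `G_M`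
(under the acyclicity hypothesis there are only finitely many such paths). -/
def Gamma (v w : Σ i, X i) : R := ∑ᶠ p : MPath X d M v w, MPath.weight X d M p

/-- `Γ↓(v,w)`: the sum of the weights of all paths from `v` to `w` whose first step
decreases the homological degree. -/
def GammaDown (v w : Σ i, X i) : R :=
  ∑ᶠ (p : MPath X d M v w) (_ : MPath.firstDown X d M p), MPath.weight X d M p

/-- `Γ↑(v,w)`: the sum of the weights of all paths from `v` to `w` whose first step
increases the homological degree. -/
def GammaUp (v w : Σ i, X i) : R :=
  ∑ᶠ (p : MPath X d M v w) (_ : MPath.firstUp X d M p), MPath.weight X d M p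

/-- A basis element is critical if it lies in no edge of `M`. -/
def CriticalV (v : Σ i, X i) : Prop :=
  ∀ (j : ℕ) (a : X (j + 1)) (b : X j), (a, b) ∈ M j →
    v ≠ ⟨j + 1, a⟩ ∧ v ≠ ⟨j, b⟩

/-- The critical basis elements of homological degree `i`. -/
abbrev Crit (i : ℕ) := {c : X i // CriticalV X M ⟨i, c⟩}

/-- The `R`-linear map between free left `R`-modules determined by a matrix of
coefficients. -/
def liftMap {α β : Type} [Fintype α] (w : α → β → R) :
    (α → R) →ₗ[R] (β → R) where
  toFun v b := ∑ a, v a * w a b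
  map_add' u v := by
    funext b
    simp [add_mul, Finset.sum_add_distrib]
  map_smul' r v := by
    funext b
    simp [Finset.mul_sum, mul_assoc]

/-- The differential `∂` of the original complex `C`. -/
def Dmap (i : ℕ) : (X (i + 1) → R) →ₗ[R] (X i → R) :=
  liftMap (fun c c' => d i c c')

/-- The Morse differential `∂^M (c) = ∑ Γ(c,c') • c'` on the critical cells. -/
def DMmap (i : ℕ) : (Crit X M (i + 1) → R) →ₗ[R] (Crit X M i → R) :=
  liftMap (fun c c' => Gamma X d M ⟨i + 1, c.1⟩ ⟨i, c'.1⟩)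

/-- The comparison map `f : C → C^M`, `f(c) = ∑ Γ(c,c') • c'`. -/
def fmap (i : ℕ) : (X i → R) →ₗ[R] (Crit X M i → R) :=
  liftMap (fun c c' => Gamma X d M ⟨i, c⟩ ⟨i, c'.1⟩)

/-- The comparison map `g : C^M → C`, `g(c) = ∑ Γ(c,c') • c'`. -/
def gmap (i : ℕ) : (Crit X M i → R) →ₗ[R] (X i → R) :=
  liftMap (fun c c' => Gamma X d M ⟨i, c.1⟩ ⟨i, c'⟩)

/-- The homotopy `χ : C_i → C_{i+1}`, `χ(c) = ∑ Γ(c,c') • c'`. -/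
def chimap (i : ℕ) : (X i → R) →ₗ[R] (X (i + 1) → R) :=
  liftMap (fun c c' => Gamma X d M ⟨i, c⟩ ⟨i + 1, c'⟩)

/-!
Let `P i` be the matrix of the values `Γ(b, w)`, with `b` any cell and `w` a critical cell of
degree `i`.  Decomposing paths by their first step shows that `∂ * P i` vanishes on the rows of
cells matched downwards and agrees with `∂^M` on critical rows.  Conversely, a matrix `A` with rows
indexed by the cells of degree `i` is determined by its rows at the cells not matched upwards and
the rows of `∂ * A` at the cells matched downwards, by induction along the zigzags of `G_M`.
This uniqueness yields `P (i + 1) * ∂^M = ∂ * P i`, so that `∂^M * ∂^M` is the restriction of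
`∂ * P * ∂^M = ∂ * ∂ * P = 0` to critical rows.
-/

/-- The vertices matched with a cell of higher degree, i.e. the lower ends of edges of `M`. -/
inductive IsMatchedUp : (Σ i, X i) → Prop
  | of_mem {i : ℕ} {c : X (i + 1)} {b : X i} (h : (c, b) ∈ M i) : IsMatchedUp ⟨i, b⟩

/-- The vertices matched with a cell of lower degree, i.e. the upper ends of edges of `M`. -/
inductive IsMatchedDown : (Σ i, X i) → Prop
  | of_mem {i : ℕ} {c : X (i + 1)} {b : X i} (h : (c, b) ∈ M i) : IsMatchedDown ⟨i + 1, c⟩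

/-- A matching with acyclic graph `G_M` whose matched edges have unit weights, central or not. -/
structure IsAcyclicUnitMatching : Prop where
  lower_unique {i : ℕ} {c : X (i + 1)} {b₁ b₂ : X i} :
    (c, b₁) ∈ M i → (c, b₂) ∈ M i → b₁ = b₂
  upper_unique {i : ℕ} {c₁ c₂ : X (i + 1)} {b : X i} :
    (c₁, b) ∈ M i → (c₂, b) ∈ M i → c₁ = c₂
  not_isMatchedUp {v : Σ i, X i} : IsMatchedDown X M v → ¬ IsMatchedUp X M v
  isUnit {i : ℕ} {c : X (i + 1)} {b : X i} : (c, b) ∈ M i → IsUnit (d i c b)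
  acyclic (v : Σ i, X i) : ¬ Relation.TransGen (MStep X d M) v v

/-- `Zigzag X d M b' b` holds when `G_M` has a path `b → c → b'` going up along a matched edge and
down again. -/
def Zigzag {i : ℕ} (b' b : X i) : Prop :=
  ∃ c : X (i + 1), (c, b) ∈ M i ∧ (c, b') ∉ M i ∧ d i c b' ≠ 0

section Paths

variable {X d M}

omit [∀ i, Fintype (X i)]

theorem IsAcyclicMatching.isAcyclicUnitMatching (hM : IsAcyclicMatching X d M) :
    IsAcyclicUnitMatching X d M := by
  obtain ⟨-, hlower, hupper, hdisj, hunit, hacyc⟩ := hM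
  refine ⟨hlower _ _ _ _, hupper _ _ _ _, ?_, fun h => (hunit _ _ _ h).2, hacyc⟩
  rintro _ ⟨hdown⟩ hup
  cases hup with
  | of_mem hup => exact hdisj _ _ _ _ hup hdown

theorem criticalV_iff {v : Σ i, X i} :
    CriticalV X M v ↔ ¬ IsMatchedUp X M v ∧ ¬ IsMatchedDown X M v := by
  constructor
  · intro hv
    exact ⟨fun ⟨h⟩ => (hv _ _ _ h).2 rfl, fun ⟨h⟩ => (hv _ _ _ h).1 rfl⟩
  · rintro ⟨hup, hdown⟩ i c b h
    exact ⟨fun hv => hdown (hv ▸ .of_mem h), fun hv => hup (hv ▸ .of_mem h)⟩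

theorem transGen_mStep_of_zigzag {i : ℕ} {b' b : X i} (h : Zigzag X d M b' b) :
    Relation.TransGen (MStep X d M) ⟨i, b⟩ ⟨i, b'⟩ := by
  obtain ⟨c, hb, hb', hne⟩ := h
  exact (Relation.TransGen.single (.up i c b hb)).tail (.down i c b' hne hb')

theorem IsAcyclicUnitMatching.wellFounded_zigzag (hM : IsAcyclicUnitMatching X d M) (i : ℕ)
    [Finite (X i)] : WellFounded (Zigzag X d M (i := i)) := by
  have path_of_transGen {b' b : X i} (h : Relation.TransGen (Zigzag X d M) b' b) :
      Relation.TransGen (MStep X d M) ⟨i, b⟩ ⟨i, b'⟩ := by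
    induction h with
    | single h => exact transGen_mStep_of_zigzag h
    | tail _ h ih => exact (transGen_mStep_of_zigzag h).trans ih
  have : Std.Irrefl (Relation.TransGen (Zigzag X d M (i := i))) :=
    ⟨fun b h => hM.acyclic ⟨i, b⟩ (path_of_transGen h)⟩
  exact Subrelation.wf Relation.TransGen.single (Finite.wellFounded_of_trans_of_irrefl _)

namespace MPath

theorem degree_le_and_lt (hM : IsAcyclicUnitMatching X d M) {v w : Σ i, X i}
    (p : MPath X d M v w) (hw : CriticalV X M w) :
    w.1 ≤ v.1 ∧ (IsMatchedDown X M v → w.1 < v.1) := by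
  induction p with
  | nil v => exact ⟨le_rfl, fun hv => ((criticalV_iff.1 hw).2 hv).elim⟩
  | down i _ _ _ _ w _ ih =>
    have hlt : w.1 < i + 1 := Nat.lt_succ_of_le (ih hw).1
    exact ⟨hlt.le, fun _ => hlt⟩
  | up i _ _ hmem w _ ih =>
    have hlt : w.1 < i + 1 := (ih hw).2 (.of_mem hmem)
    exact ⟨Nat.le_of_lt_succ hlt, fun hv => (hM.not_isMatchedUp hv (.of_mem hmem)).elim⟩

theorem eq_of_not_isMatchedUp (hM : IsAcyclicUnitMatching X d M) {v w : Σ i, X i}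
    (hw : CriticalV X M w) (hv : ¬ IsMatchedUp X M v) (hvw : v.1 ≤ w.1)
    (p : MPath X d M v w) : v = w := by
  cases p with
  | nil => rfl
  | down i _ _ _ _ _ p =>
    exact ((hvw.trans (p.degree_le_and_lt hM hw).1).not_gt i.lt_succ_self).elim
  | up _ _ _ hmem _ _ => exact (hv (.of_mem hmem)).elim

theorem eq_nil (hM : IsAcyclicUnitMatching X d M) {v : Σ i, X i} (hv : CriticalV X M v)
    (p : MPath X d M v v) : p = nil v := by
  obtain ⟨i, b⟩ := v
  cases p with
  | nil => rfl
  | down i _ _ _ _ _ p => exact ((p.degree_le_and_lt hM hv).1.not_gt i.lt_succ_self).elim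
  | up _ _ _ hmem _ _ => exact ((criticalV_iff.1 hv).1 (.of_mem hmem)).elim

theorem bijective_up (hM : IsAcyclicUnitMatching X d M) {i : ℕ} {c : X (i + 1)} {b : X i}
    (h : (c, b) ∈ M i) {w : Σ i, X i} (hw : CriticalV X M w) (hiw : i ≤ w.1) :
    Function.Bijective (up (d := d) i c b h w) := by
  refine ⟨fun p q hpq => by simpa using hpq, fun p => ?_⟩
  cases p with
  | nil => exact ((criticalV_iff.1 hw).1 (.of_mem h)).elim
  | down j _ _ _ _ _ p =>
    exact ((hiw.trans (p.degree_le_and_lt hM hw).1).not_gt j.lt_succ_self).elim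
  | up _ c' _ h' _ p =>
    obtain rfl := hM.upper_unique h h'
    exact ⟨p, rfl⟩

theorem bijective_down {i : ℕ} {c : X (i + 1)} (hc : ¬ IsMatchedUp X M ⟨i + 1, c⟩)
    {w : Σ i, X i} (hcw : ⟨i + 1, c⟩ ≠ w) :
    Function.Bijective fun p : Σ b : {b : X i // (c, b) ∉ M i ∧ d i c b ≠ 0},
        MPath X d M ⟨i, b.1⟩ w =>
      down i c p.1.1 p.1.2.2 p.1.2.1 w p.2 := by
  constructor
  · rintro ⟨⟨b, hb⟩, p⟩ ⟨⟨b', hb'⟩, q⟩ hpq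
    simp only [down.injEq] at hpq
    obtain ⟨rfl, hpq⟩ := hpq
    cases hpq
    rfl
  · intro p
    cases p with
    | nil => exact (hcw rfl).elim
    | down _ _ b hne hnm _ p => exact ⟨⟨⟨b, hnm, hne⟩, p⟩, rfl⟩
    | up _ _ _ h _ _ => exact (hc (.of_mem h)).elim

theorem finite_of_criticalV (hM : IsAcyclicUnitMatching X d M) {i : ℕ} [Finite (X i)]
    {w : Σ i, X i} (hw : CriticalV X M w) (hiw : i ≤ w.1) (b : X i) :
    Finite (MPath X d M ⟨i, b⟩ w) := by
  induction b using (hM.wellFounded_zigzag i).induction with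
  | _ b ih =>
    by_cases hb : IsMatchedUp X M ⟨i, b⟩
    · cases hb with
      | @of_mem _ c _ h =>
        have hc := hM.not_isMatchedUp (.of_mem h)
        have hcw : (⟨i + 1, c⟩ : Σ i, X i) ≠ w := fun hcw =>
          (criticalV_iff.1 hw).2 (hcw ▸ .of_mem h)
        have (b' : {b' : X i // (c, b') ∉ M i ∧ d i c b' ≠ 0}) :
            Finite (MPath X d M ⟨i, b'.1⟩ w) := ih b'.1 ⟨c, h, b'.2⟩
        have := Finite.of_surjective _ (bijective_down (d := d) hc hcw).surjective
        exact Finite.of_surjective _ (bijective_up hM h hw hiw).surjective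
    · have : Subsingleton (MPath X d M ⟨i, b⟩ w) := by
        refine ⟨fun p q => ?_⟩
        obtain rfl := p.eq_of_not_isMatchedUp hM hw hb hiw
        rw [p.eq_nil hM hw, q.eq_nil hM hw]
      infer_instance

end MPath

theorem Gamma_of_not_isMatchedUp (hM : IsAcyclicUnitMatching X d M) {v w : Σ i, X i}
    (hw : CriticalV X M w) (hv : ¬ IsMatchedUp X M v) (hvw : v.1 ≤ w.1) :
    Gamma X d M v w = if v = w then 1 else 0 := by
  split_ifs with h
  · subst h
    let _ : Unique (MPath X d M v v) := ⟨⟨.nil v⟩, fun p => p.eq_nil hM hw⟩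
    exact finsum_unique (MPath.weight X d M (v := v) (w := v))
  · have : IsEmpty (MPath X d M v w) := ⟨fun p => h (p.eq_of_not_isMatchedUp hM hw hv hvw)⟩
    exact finsum_of_isEmpty _

theorem Gamma_of_mem (hM : IsAcyclicUnitMatching X d M) {i : ℕ} [Finite (X i)] {c : X (i + 1)}
    {b : X i} (h : (c, b) ∈ M i) {w : Σ i, X i} (hw : CriticalV X M w) (hiw : i ≤ w.1) :
    Gamma X d M ⟨i, b⟩ w = -Ring.inverse (d i c b) * Gamma X d M ⟨i + 1, c⟩ w := by
  have := MPath.finite_of_criticalV hM hw hiw b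
  have := Finite.of_injective _ (MPath.bijective_up hM h hw hiw).injective
  calc Gamma X d M ⟨i, b⟩ w
      = ∑ᶠ p : MPath X d M ⟨i + 1, c⟩ w, -Ring.inverse (d i c b) * p.weight X d M :=
        (finsum_eq_of_bijective _ (MPath.bijective_up hM h hw hiw) fun _ => rfl).symm
    _ = -Ring.inverse (d i c b) * Gamma X d M ⟨i + 1, c⟩ w :=
        (mul_finsum' _ _ (Set.toFinite _)).symm

theorem Gamma_eq_sum_faces {i : ℕ} [Fintype (X i)] {c : X (i + 1)}
    (hc : ¬ IsMatchedUp X M ⟨i + 1, c⟩) {w : Σ i, X i} (hcw : ⟨i + 1, c⟩ ≠ w)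
    [∀ b, Finite (MPath X d M ⟨i, b⟩ w)] :
    Gamma X d M ⟨i + 1, c⟩ w = ∑ b with (c, b) ∉ M i, d i c b * Gamma X d M ⟨i, b⟩ w := by
  have (b : X i) : Fintype (MPath X d M ⟨i, b⟩ w) := Fintype.ofFinite _
  have Gamma_eq_sum (b : X i) :
      Gamma X d M ⟨i, b⟩ w = ∑ p : MPath X d M ⟨i, b⟩ w, p.weight X d M :=
    finsum_eq_sum_of_fintype _
  calc Gamma X d M ⟨i + 1, c⟩ w
      = ∑ᶠ p : Σ b : {b : X i // (c, b) ∉ M i ∧ d i c b ≠ 0}, MPath X d M ⟨i, b.1⟩ w,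
          d i c p.1.1 * p.2.weight X d M :=
        (finsum_eq_of_bijective _ (MPath.bijective_down hc hcw) fun _ => rfl).symm
    _ = ∑ b : {b : X i // (c, b) ∉ M i ∧ d i c b ≠ 0}, d i c b * Gamma X d M ⟨i, b⟩ w := by
        simp only [finsum_eq_sum_of_fintype, Fintype.sum_sigma, Gamma_eq_sum, Finset.mul_sum]
    _ = ∑ b with (c, b) ∉ M i ∧ d i c b ≠ 0, d i c b * Gamma X d M ⟨i, b⟩ w :=
        (Finset.sum_subtype _ (by simp) fun b => d i c b * Gamma X d M ⟨i, b⟩ w).symm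
    _ = ∑ b with (c, b) ∉ M i, d i c b * Gamma X d M ⟨i, b⟩ w := by
        rw [← Finset.filter_filter]
        exact Finset.sum_filter_of_ne fun b _ => mt fun h => by rw [h, zero_mul]

end Paths

section Matrices

/-- The matrix of the differential `∂`, with rows indexed by the cells of higher degree. -/
def boundaryMatrix (i : ℕ) : Matrix (X (i + 1)) (X i) R := Matrix.of (d i)

/-- The matrix of the comparison map `fmap`: the values `Γ(b, w)` for `w` critical of the same
degree as `b`. -/
def pathMatrix (i : ℕ) : Matrix (X i) (Crit X M i) R :=
  Matrix.of fun b w => Gamma X d M ⟨i, b⟩ ⟨i, w⟩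

/-- The matrix of the Morse differential `∂^M`. -/
def morseMatrix (i : ℕ) : Matrix (Crit X M (i + 1)) (Crit X M i) R :=
  Matrix.of fun c w => Gamma X d M ⟨i + 1, c⟩ ⟨i, w⟩

variable {X d M}

theorem IsComplexAux.boundaryMatrix_mul_boundaryMatrix (hC : IsComplexAux X d) (i : ℕ) :
    boundaryMatrix X d (i + 1) * boundaryMatrix X d i = 0 := by
  ext c c''
  exact hC i c c''

namespace IsAcyclicUnitMatching

theorem matrix_ext (hM : IsAcyclicUnitMatching X d M) {i : ℕ} {κ : Type*}
    {A B : Matrix (X i) κ R}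
    (hrow : ∀ b, ¬ IsMatchedUp X M ⟨i, b⟩ → A b = B b)
    (hboundary : ∀ c, IsMatchedDown X M ⟨i + 1, c⟩ →
      (boundaryMatrix X d i * A) c = (boundaryMatrix X d i * B) c) :
    A = B := by
  funext b k
  induction b using (hM.wellFounded_zigzag i).induction with
  | _ b ih =>
    by_cases hb : IsMatchedUp X M ⟨i, b⟩
    · cases hb with
      | @of_mem _ c _ h =>
        have others : ∑ b' ∈ Finset.univ.erase b, d i c b' * A b' k =
            ∑ b' ∈ Finset.univ.erase b, d i c b' * B b' k := by
          refine Finset.sum_congr rfl fun b' hb' => ?_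
          by_cases hne : d i c b' = 0
          · rw [hne, zero_mul, zero_mul]
          · have hnm : (c, b') ∉ M i := fun h' =>
              Finset.ne_of_mem_erase hb' (hM.lower_unique h' h)
            rw [ih b' ⟨c, h, hnm, hne⟩]
        have total : ∑ b', d i c b' * A b' k = ∑ b', d i c b' * B b' k :=
          congrFun (hboundary c (.of_mem h)) k
        rw [← Finset.add_sum_erase _ _ (Finset.mem_univ b),
          ← Finset.add_sum_erase _ _ (Finset.mem_univ b), others] at total
        exact (hM.isUnit h).mul_left_cancel (add_right_cancel total)
    · rw [hrow b hb]

omit [∀ i, Fintype (X i)] in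
theorem pathMatrix_apply_of_critical (hM : IsAcyclicUnitMatching X d M) {i : ℕ} (w : Crit X M i) :
    pathMatrix X d M i w.1 = Pi.single w 1 := by
  funext w'
  rw [pathMatrix, Matrix.of_apply,
    Gamma_of_not_isMatchedUp hM w'.2 (criticalV_iff.1 w.2).1 le_rfl]
  simp [Pi.single_apply, Subtype.ext_iff, eq_comm]

omit [∀ i, Fintype (X i)] in
theorem pathMatrix_apply_of_isMatchedDown (hM : IsAcyclicUnitMatching X d M) {i : ℕ} {c : X i}
    (hc : IsMatchedDown X M ⟨i, c⟩) : pathMatrix X d M i c = 0 := by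
  funext w
  rw [pathMatrix, Matrix.of_apply, Gamma_of_not_isMatchedUp hM w.2 (hM.not_isMatchedUp hc) le_rfl,
    if_neg, Pi.zero_apply]
  exact fun h => (criticalV_iff.1 w.2).2 (h ▸ hc)

theorem Gamma_eq_sum_unmatched_faces (hM : IsAcyclicUnitMatching X d M) {i : ℕ} {c : X (i + 1)}
    (hc : ¬ IsMatchedUp X M ⟨i + 1, c⟩) (w : Crit X M i) :
    Gamma X d M ⟨i + 1, c⟩ ⟨i, w⟩ =
      ∑ b with (c, b) ∉ M i, d i c b * Gamma X d M ⟨i, b⟩ ⟨i, w⟩ := by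
  have := MPath.finite_of_criticalV hM w.2 le_rfl
  exact Gamma_eq_sum_faces hc fun h => i.succ_ne_self (congrArg Sigma.fst h)

theorem boundaryMatrix_mul_pathMatrix_apply_of_critical (hM : IsAcyclicUnitMatching X d M) {i : ℕ}
    (c : Crit X M (i + 1)) :
    (boundaryMatrix X d i * pathMatrix X d M i) c.1 = morseMatrix X d M i c := by
  obtain ⟨hup, hdown⟩ := criticalV_iff.1 c.2
  funext w
  have unmatched (b : X i) : (c.1, b) ∉ M i := fun h => hdown (.of_mem h)
  refine Eq.trans ?_ (hM.Gamma_eq_sum_unmatched_faces hup w).symm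
  simp only [unmatched, not_false_eq_true, Finset.filter_true]
  rfl

theorem boundaryMatrix_mul_pathMatrix_apply_of_isMatchedDown (hM : IsAcyclicUnitMatching X d M)
    {i : ℕ} {c : X (i + 1)} (hc : IsMatchedDown X M ⟨i + 1, c⟩) :
    (boundaryMatrix X d i * pathMatrix X d M i) c = 0 := by
  cases hc with
  | @of_mem _ _ b h =>
    funext w
    have hc := hM.not_isMatchedUp (.of_mem h)
    have matched_faces : ({b' | (c, b') ∈ M i} : Finset (X i)) = {b} := by
      ext b'
      simpa using ⟨fun h' => hM.lower_unique h' h, fun h' => h' ▸ h⟩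
    calc ∑ b', d i c b' * Gamma X d M ⟨i, b'⟩ ⟨i, w⟩
        = d i c b * Gamma X d M ⟨i, b⟩ ⟨i, w⟩ + Gamma X d M ⟨i + 1, c⟩ ⟨i, w⟩ := by
          rw [← Finset.sum_filter_add_sum_filter_not _ fun b' => (c, b') ∈ M i, matched_faces,
            Finset.sum_singleton, hM.Gamma_eq_sum_unmatched_faces hc]
      _ = 0 := by
          rw [Gamma_of_mem hM h w.2 le_rfl, ← mul_assoc, mul_neg,
            Ring.mul_inverse_cancel _ (hM.isUnit h), neg_one_mul, neg_add_cancel]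

theorem pathMatrix_mul_morseMatrix (hC : IsComplexAux X d) (hM : IsAcyclicUnitMatching X d M)
    (i : ℕ) :
    pathMatrix X d M (i + 1) * morseMatrix X d M i = boundaryMatrix X d i * pathMatrix X d M i := by
  apply hM.matrix_ext
  · intro c hup
    rw [Matrix.mul_apply_eq_vecMul]
    by_cases hdown : IsMatchedDown X M ⟨i + 1, c⟩
    · rw [hM.pathMatrix_apply_of_isMatchedDown hdown, Matrix.zero_vecMul,
        hM.boundaryMatrix_mul_pathMatrix_apply_of_isMatchedDown hdown]
    · have hc : CriticalV X M ⟨i + 1, c⟩ := criticalV_iff.2 ⟨hup, hdown⟩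
      rw [hM.pathMatrix_apply_of_critical ⟨c, hc⟩, Matrix.single_one_vecMul,
        hM.boundaryMatrix_mul_pathMatrix_apply_of_critical ⟨c, hc⟩, Matrix.row]
  · intro e he
    rw [← Matrix.mul_assoc, Matrix.mul_apply_eq_vecMul,
      hM.boundaryMatrix_mul_pathMatrix_apply_of_isMatchedDown he, Matrix.zero_vecMul,
      ← Matrix.mul_assoc, hC.boundaryMatrix_mul_boundaryMatrix, Matrix.zero_mul]
    rfl

theorem morseMatrix_mul_morseMatrix (hC : IsComplexAux X d) (hM : IsAcyclicUnitMatching X d M)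
    (i : ℕ) : morseMatrix X d M (i + 1) * morseMatrix X d M i = 0 := by
  funext e
  calc (morseMatrix X d M (i + 1) * morseMatrix X d M i) e
      = (boundaryMatrix X d (i + 1) * pathMatrix X d M (i + 1) * morseMatrix X d M i) e.1 := by
        rw [Matrix.mul_apply_eq_vecMul, Matrix.mul_apply_eq_vecMul,
          hM.boundaryMatrix_mul_pathMatrix_apply_of_critical]
    _ = (boundaryMatrix X d (i + 1) * boundaryMatrix X d i * pathMatrix X d M i) e.1 := by
        rw [Matrix.mul_assoc, hM.pathMatrix_mul_morseMatrix hC, ← Matrix.mul_assoc]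
    _ = 0 := by
        rw [hC.boundaryMatrix_mul_boundaryMatrix, Matrix.zero_mul]
        rfl

end IsAcyclicUnitMatching

end Matrices

theorem liftMap_comp_liftMap {α β γ : Type} [Fintype α] [Fintype β] (A : Matrix α β R)
    (B : Matrix β γ R) : liftMap B ∘ₗ liftMap A = liftMap (A * B) :=
  LinearMap.ext fun v => Matrix.vecMul_vecMul v A B

theorem morse_differential_squared_zero_general
    (hC : IsComplexAux X d) (hM : IsAcyclicUnitMatching X d M) :
    ∀ i, DMmap X d M i ∘ₗ DMmap X d M (i + 1) = 0 := by
  intro i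
  calc DMmap X d M i ∘ₗ DMmap X d M (i + 1)
      = liftMap (morseMatrix X d M (i + 1) * morseMatrix X d M i) := liftMap_comp_liftMap _ _
    _ = 0 := by
        rw [hM.morseMatrix_mul_morseMatrix hC]
        exact LinearMap.ext Matrix.vecMul_zero

/-- Lemma B.1 (P1).  If `M` is an acyclic matching on the graph
`G(C)` of the chain complex `C`, then the Morse maps square to zero:
`∂^M_i ∘ ∂^M_{i+1} = 0` for all `i ≥ 0`, so `(C^M, ∂^M)` is a chain complex. -/
theorem morse_differential_squared_zero
    (hC : IsComplexAux X d) (hM : IsAcyclicMatching X d M) :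
    ∀ i, DMmap X d M i ∘ₗ DMmap X d M (i + 1) = 0 :=
  morse_differential_squared_zero_general X d M hC hM.isAcyclicUnitMatching

end ADMT

end
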